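/- Let R = k[x_0,...,x_n] with n ≥ 2 and let I_1 be a homogeneous ideal of height 2 such that R/I_1 is Cohen-Macaulay. Let F_1 ∈ I_1 and F_2 ∈ R be homogeneous forms forming a regular sequence. Then the basic double link ideal I = F_2 I_1 + (F_1) has height 2 and R/I is Cohen-Macaulay. -/

import Mathlib

open MvPolynomial

/-- The height of an ideal: the infimum of the heights of the primes containing it. -/
noncomputable def idealHeight {R : Type*} [CommRing R] (I : Ideal R) : ℕ∞ :=
  ⨅ p : {p : PrimeSpectrum R // I ≤ p.asIdeal}, Order.height p.1

/-- For a homogeneous ideal `I` of height `c` in `k[x₀,…,xₙ]`, Cohen-Macaulayness of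
`R/I` expressed via the existence of a regular sequence of length `(n+1) - c` in the
irrelevant maximal ideal acting on `R/I`. -/
def quotientIsCM (k : Type*) [Field k] (n : ℕ)
    (I : Ideal (MvPolynomial (Fin (n + 1)) k)) (c : ℕ) : Prop :=
  ∃ rs : List (MvPolynomial (Fin (n + 1)) k), rs.length = (n + 1) - c ∧
    (∀ r ∈ rs, r ∈ Ideal.span (Set.range X)) ∧
    RingTheory.Sequence.IsRegular (MvPolynomial (Fin (n + 1)) k ⧸ I) rs

/-!
Multiplication by `F₂` embeds `R/I₁` into `R/I`, because `(I : F₂) = I₁` when `F₁, F₂` is a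
regular sequence and `F₁ ∈ I₁`. The cokernel is `R/(F₁, F₂)`, whose depth is `depth R - 2`, so the
long exact sequence of `Ext` bounds the depth of the middle term `R/I` from below; by the Rees
theorem the vanishing of `Ext` is the same as the existence of regular sequences. For the height,
`V(I)` is the union of `V(I₁)` and `V(F₁, F₂)`.
-/

open CategoryTheory Abelian RingTheory.Sequence

universe u

section ExtVanishing

variable {C : Type*} [Category* C] [Abelian C] [HasExt C]

/-- The groups `Ext N M i` vanish for all `i < n`. For finite modules over a Noetherian ring and
`N = R/I` this expresses `n ≤ grade(I, M)`. -/
def ExtVanishesBelow (N M : C) (n : ℕ) : Prop :=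
  ∀ i < n, Subsingleton (Ext N M i)

namespace ExtVanishesBelow

variable {N : C}

theorem of_iso {M M' : C} {n : ℕ} (e : M ≅ M') (h : ExtVanishesBelow N M n) :
    ExtVanishesBelow N M' n := fun i hi ↦
  have : Subsingleton ((extFunctorObj N i).obj M) := h i hi
  ((extFunctorObj N i).mapIso e).addCommGroupIsoToAddEquiv.symm.toEquiv.subsingleton

theorem middle {S : ShortComplex C} (hS : S.ShortExact) {n : ℕ}
    (h₁ : ExtVanishesBelow N S.X₁ n) (h₃ : ExtVanishesBelow N S.X₃ n) :
    ExtVanishesBelow N S.X₂ n := fun i hi ↦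
  have := h₁ i hi
  have := h₃ i hi
  AddCommGrpCat.subsingleton_of_isZero <|
    (Ext.covariant_sequence_exact₂' N hS i).isZero_of_both_zeros
      ((AddCommGrpCat.isZero_of_subsingleton _).eq_zero_of_src _)
      ((AddCommGrpCat.isZero_of_subsingleton _).eq_zero_of_tgt _)

theorem right {S : ShortComplex C} (hS : S.ShortExact) {n : ℕ}
    (h₁ : ExtVanishesBelow N S.X₁ (n + 1)) (h₂ : ExtVanishesBelow N S.X₂ n) :
    ExtVanishesBelow N S.X₃ n := fun i hi ↦
  have := h₁ (i + 1) (by lia)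
  have := h₂ i hi
  AddCommGrpCat.subsingleton_of_isZero <|
    (Ext.covariant_sequence_exact₃' N hS i (i + 1) rfl).isZero_of_both_zeros
      ((AddCommGrpCat.isZero_of_subsingleton _).eq_zero_of_src _)
      ((AddCommGrpCat.isZero_of_subsingleton _).eq_zero_of_tgt _)

theorem mono {M : C} {m n : ℕ} (hmn : m ≤ n) (h : ExtVanishesBelow N M n) :
    ExtVanishesBelow N M m := fun i hi ↦ h i (hi.trans_le hmn)

end ExtVanishesBelow

end ExtVanishing

section Grade

variable {R : Type u} [CommRing R] {M : Type u} [AddCommGroup M] [Module R M]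

theorem ExtVanishesBelow.quotient_ofList_smul_top {N : ModuleCat.{u} R} {rs : List R} {n : ℕ}
    (hrs : IsWeaklyRegular M rs) (h : ExtVanishesBelow N (ModuleCat.of R M) (n + rs.length)) :
    ExtVanishesBelow N (ModuleCat.of R (M ⧸ (Ideal.ofList rs • ⊤ : Submodule R M))) n := by
  induction rs generalizing M with
  | nil =>
    have hbot : (Ideal.ofList ([] : List R) • ⊤ : Submodule R M) = ⊥ := by simp
    exact h.of_iso (Submodule.quotEquivOfEqBot _ hbot).symm.toModuleIso
  | cons r rs ih =>
    obtain ⟨hr, hrs⟩ := (isWeaklyRegular_cons_iff M r rs).1 hrs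
    have hquot : ExtVanishesBelow N (ModuleCat.of R (QuotSMulTop r M)) (n + rs.length) :=
      right (S := (ModuleCat.of R M).smulShortComplex r) hr.smulShortComplex_shortExact h
        (h.mono (Nat.add_le_add_left (Nat.le_succ _) n))
    exact (ih hrs hquot).of_iso
      (Submodule.quotOfListConsSMulTopEquivQuotSMulTopInner M r rs).symm.toModuleIso

/-- The ideal `I` contains an `M`-regular sequence of length `n`, that is, `n ≤ grade(I, M)`. The
length is prescribed exactly, in accordance with `quotientIsCM`. -/
def HasRegularSequenceIn (I : Ideal R) (M : Type*) [AddCommGroup M] [Module R M] (n : ℕ) : Prop :=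
  ∃ rs : List R, rs.length = n ∧ (∀ r ∈ rs, r ∈ I) ∧ IsRegular M rs

theorem hasRegularSequenceIn_iff_extVanishesBelow [IsNoetherianRing R] [Module.Finite R M]
    {I : Ideal R} (hI : I • (⊤ : Submodule R M) < ⊤) (n : ℕ) :
    HasRegularSequenceIn I M n ↔
      ExtVanishesBelow (ModuleCat.of R (R ⧸ I)) (ModuleCat.of R M) n := by
  have hsupp : Module.support R (R ⧸ I) = PrimeSpectrum.zeroLocus I := by
    rw [Module.support_eq_zeroLocus, Ideal.annihilator_quotient]
  constructor
  · rintro ⟨rs, rfl, hmem, hreg⟩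
    exact ModuleCat.subsingleton_ext_of_exists_isRegular I _ hsupp.subset _ hI rs hmem hreg
  · exact ModuleCat.exists_isRegular_of_exists_subsingleton_ext I n (ModuleCat.of R M) hI _ hsupp

theorem smul_top_quotient_lt_top {I J : Ideal R} (hI : I ≠ ⊤) (hJI : J ≤ I) :
    I • (⊤ : Submodule R (R ⧸ J)) < ⊤ := by
  rw [lt_top_iff_ne_top, ← Submodule.range_mkQ, ← Submodule.map_top, ← Submodule.map_smul'']
  intro h
  have := congrArg (Submodule.comap J.mkQ) h
  simp [hJI, hI] at this

end Grade

section QuotientSequence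

variable {R : Type u} [CommRing R] {M N : Type u} [AddCommGroup M] [Module R M] [AddCommGroup N]
  [Module R N]

theorem mapQ_comap_injective (f : M →ₗ[R] N) (q : Submodule R N) :
    Function.Injective ((q.comap f).mapQ q f le_rfl) := by
  rw [← LinearMap.ker_eq_bot, Submodule.ker_mapQ, Submodule.mkQ_map_self]

theorem exact_mapQ_factor (f : M →ₗ[R] N) {p : Submodule R M} {q : Submodule R N}
    (h : p ≤ q.comap f) :
    Function.Exact (p.mapQ q f h)
      (Submodule.factor (le_sup_left : q ≤ q ⊔ LinearMap.range f)) := by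
  rw [LinearMap.exact_iff, Submodule.range_mapQ, Submodule.factor, Submodule.ker_mapQ]
  simp

theorem ExtVanishesBelow.quotient_of_comap {X : ModuleCat.{u} R} {n : ℕ} (f : M →ₗ[R] N)
    (q : Submodule R N) (h₁ : ExtVanishesBelow X (ModuleCat.of R (M ⧸ q.comap f)) n)
    (h₃ : ExtVanishesBelow X (ModuleCat.of R (N ⧸ q ⊔ LinearMap.range f)) n) :
    ExtVanishesBelow X (ModuleCat.of R (N ⧸ q)) n := by
  have hexact := exact_mapQ_factor f (le_refl (q.comap f))
  have hS : (ModuleCat.shortComplexOfCompEqZero _ _ hexact.linearMap_comp_eq_zero).ShortExact :=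
    { exact := ModuleCat.shortComplex_exact _ hexact
      mono_f := (ModuleCat.mono_iff_injective _).2 (mapQ_comap_injective f q)
      epi_g := (ModuleCat.epi_iff_surjective _).2 (Submodule.factor_surjective le_sup_left) }
  exact middle hS h₁ h₃

end QuotientSequence

section Height

variable {R : Type*} [CommRing R]

theorem length_le_height_of_isWeaklyRegular [IsNoetherianRing R] {rs : List R}
    (hrs : IsWeaklyRegular R rs) (p : Ideal R) [p.IsPrime] (hp : ∀ r ∈ rs, r ∈ p) :
    rs.length ≤ p.height := by
  let S := Localization.AtPrime p
  have hreg : IsRegular S (rs.map (algebraMap R S)) :=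
    hrs.isRegular_of_isLocalization_of_mem S p hp
  have : Nontrivial (S ⧸ Ideal.ofList (rs.map (algebraMap R S))) := by
    refine Ideal.Quotient.nontrivial_iff.2 fun h ↦ hreg.top_ne_smul ?_
    simp [h]
  have hdim := ringKrullDim_add_length_eq_ringKrullDim_of_isRegular _ hreg
  rw [IsLocalization.AtPrime.ringKrullDim_eq_height p S, List.length_map] at hdim
  have hle : (rs.length : WithBot ℕ∞) ≤ p.height :=
    hdim ▸ le_add_of_nonneg_left ringKrullDim_nonneg_of_nontrivial
  exact_mod_cast hle

theorem length_le_idealHeight_ofList [IsNoetherianRing R] {rs : List R}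
    (hrs : IsWeaklyRegular R rs) : rs.length ≤ idealHeight (Ideal.ofList rs) := by
  refine le_iInf fun ⟨p, hp⟩ ↦ ?_
  rw [← PrimeSpectrum.height_eq_orderHeight]
  exact length_le_height_of_isWeaklyRegular hrs p.asIdeal fun r hr ↦ hp (Ideal.subset_span hr)

theorem idealHeight_eq_inf_of_forall_isPrime {I J K : Ideal R}
    (h : ∀ p : Ideal R, p.IsPrime → (I ≤ p ↔ J ≤ p ∨ K ≤ p)) :
    idealHeight I = idealHeight J ⊓ idealHeight K := by
  refine le_antisymm (le_inf ?_ ?_) (le_iInf fun ⟨p, hp⟩ ↦ ?_)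
  · exact le_iInf fun p ↦ iInf_le_of_le ⟨p.1, (h _ p.1.2).2 (.inl p.2)⟩ le_rfl
  · exact le_iInf fun p ↦ iInf_le_of_le ⟨p.1, (h _ p.1.2).2 (.inr p.2)⟩ le_rfl
  · rcases (h _ p.2).1 hp with hJ | hK
    · exact inf_le_of_left_le (iInf_le_of_le ⟨p, hJ⟩ le_rfl)
    · exact inf_le_of_right_le (iInf_le_of_le ⟨p, hK⟩ le_rfl)

theorem ne_top_of_idealHeight_ne_top {I : Ideal R} (h : idealHeight I ≠ ⊤) : I ≠ ⊤ := by
  rintro rfl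
  refine h (iInf_eq_top.2 fun p ↦ (p.1.2.ne_top (top_le_iff.1 p.2)).elim)

end Height

section BasicDoubleLink

variable {R : Type u} [CommRing R] {I : Ideal R} {F G : R}

/-- The basic double link `G · I + (F)` of an ideal `I`. The conditions that `F ∈ I` and that
`F, G` is a regular sequence are imposed in the lemmas that need them. -/
def basicDoubleLink (I : Ideal R) (F G : R) : Ideal R :=
  Ideal.span {G} * I + Ideal.span {F}

theorem basicDoubleLink_le (hF : F ∈ I) : basicDoubleLink I F G ≤ I :=
  sup_le Ideal.mul_le_right ((Ideal.span_singleton_le_iff_mem I).2 hF)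

theorem basicDoubleLink_le_iff_of_isPrime (hF : F ∈ I) (p : Ideal R) (hp : p.IsPrime) :
    basicDoubleLink I F G ≤ p ↔ I ≤ p ∨ Ideal.ofList [F, G] ≤ p := by
  have hIp : I ≤ p → F ∈ p := fun h ↦ h hF
  simp only [basicDoubleLink, Submodule.add_eq_sup, sup_le_iff, hp.mul_le, Ideal.ofList_cons,
    Ideal.ofList_nil, bot_le, Ideal.span_singleton_le_iff_mem]
  tauto

theorem basicDoubleLink_sup_range_lsmul :
    basicDoubleLink I F G ⊔ LinearMap.range (LinearMap.lsmul R R G) = Ideal.ofList [F, G] := by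
  have hrange : LinearMap.range (LinearMap.lsmul R R G) = Ideal.span {G} := by
    ext x
    simp [Ideal.mem_span_singleton', mul_comm]
  have hle : Ideal.span {G} * I ≤ Ideal.span {G} := Ideal.mul_le_left
  rw [hrange, basicDoubleLink, Submodule.add_eq_sup, sup_right_comm, sup_eq_right.2 hle, sup_comm]
  simp

theorem comap_lsmul_basicDoubleLink (hF : F ∈ I) (hreg : IsWeaklyRegular R [F, G]) :
    Submodule.comap (LinearMap.lsmul R R G) (basicDoubleLink I F G) = I := by
  have hG : ∀ x, G * x ∈ Ideal.span {F} → x ∈ Ideal.span {F} := by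
    have := hreg.regular_mod_prev 1 (by simp)
    rw [isSMulRegular_quotient_iff_mem_of_smul_mem] at this
    simpa [Ideal.ofList_singleton] using this
  refine le_antisymm (fun x hx ↦ ?_) fun x hx ↦
    Ideal.mem_sup_left (Ideal.mul_mem_mul (Ideal.mem_span_singleton_self G) hx)
  obtain ⟨_, hGy, b, hb, hsum⟩ := Submodule.mem_sup.1 hx
  obtain ⟨y, hy, rfl⟩ := Ideal.mem_span_singleton_mul.1 hGy
  have hxy : x - y ∈ Ideal.span {F} := hG _ <| by
    have hdiff : G * x - G * y = b := sub_eq_of_eq_add' hsum.symm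
    rwa [mul_sub, hdiff]
  exact (I.sub_mem_iff_left hy).1 ((Ideal.span_singleton_le_iff_mem I).2 hF hxy)

theorem idealHeight_basicDoubleLink (hF : F ∈ I) :
    idealHeight (basicDoubleLink I F G) = idealHeight I ⊓ idealHeight (Ideal.ofList [F, G]) :=
  idealHeight_eq_inf_of_forall_isPrime (basicDoubleLink_le_iff_of_isPrime hF)

theorem HasRegularSequenceIn.quotient_basicDoubleLink [IsNoetherianRing R] {m : Ideal R} {n : ℕ}
    (hm : m ≠ ⊤) (hIm : I ≤ m) (hF : F ∈ I) (hreg : IsWeaklyRegular R [F, G])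
    (hR : HasRegularSequenceIn m R (n + 2)) (hI : HasRegularSequenceIn m (R ⧸ I) n) :
    HasRegularSequenceIn m (R ⧸ basicDoubleLink I F G) n := by
  have hm' : m • (⊤ : Submodule R R) < ⊤ := by simpa [lt_top_iff_ne_top] using hm
  have hlink : basicDoubleLink I F G ≤ m := (basicDoubleLink_le hF).trans hIm
  rw [hasRegularSequenceIn_iff_extVanishesBelow hm'] at hR
  rw [hasRegularSequenceIn_iff_extVanishesBelow (M := R ⧸ I)
    (smul_top_quotient_lt_top hm hIm)] at hI
  rw [hasRegularSequenceIn_iff_extVanishesBelow (M := R ⧸ basicDoubleLink I F G)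
    (smul_top_quotient_lt_top hm hlink)]
  have hcoker := ExtVanishesBelow.quotient_ofList_smul_top hreg hR
  rw [smul_eq_mul, Ideal.mul_top, ← basicDoubleLink_sup_range_lsmul] at hcoker
  rw [← comap_lsmul_basicDoubleLink hF hreg] at hI
  exact .quotient_of_comap (LinearMap.lsmul R R G) _ hI hcoker

theorem basic_double_link_is_CM_general [IsNoetherianRing R] {m : Ideal R} {n : ℕ} (hm : m ≠ ⊤)
    (hR : HasRegularSequenceIn m R (n + 2)) (hIm : I ≤ m) (hht : idealHeight I = 2)
    (hI : HasRegularSequenceIn m (R ⧸ I) n) (hF : F ∈ I) (hreg : IsWeaklyRegular R [F, G]) :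
    idealHeight (basicDoubleLink I F G) = 2 ∧
      HasRegularSequenceIn m (R ⧸ basicDoubleLink I F G) n := by
  refine ⟨?_, .quotient_basicDoubleLink hm hIm hF hreg hR hI⟩
  rw [idealHeight_basicDoubleLink hF, hht]
  exact inf_eq_left.2 (length_le_idealHeight_ofList hreg)

end BasicDoubleLink

section PolynomialRing

variable {σ R : Type*} [CommRing R]

theorem isSMulRegular_X_quotient_span_X_image {s : Set σ} {i : σ} (hi : i ∉ s) :
    IsSMulRegular (MvPolynomial σ R ⧸ Ideal.span (X '' s : Set (MvPolynomial σ R)))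
      (X i : MvPolynomial σ R) := by
  classical
  rw [isSMulRegular_quotient_iff_mem_of_smul_mem]
  intro p hp
  rw [smul_eq_mul, mem_ideal_span_X_image] at hp
  refine mem_ideal_span_X_image.2 fun d hd ↦ ?_
  obtain ⟨j, hj, hne⟩ := hp (Finsupp.single i 1 + d) <| by
    rwa [mem_support_iff, coeff_X_mul, ← mem_support_iff]
  have hij : i ≠ j := by rintro rfl; exact hi hj
  exact ⟨j, hj, by simpa [Finsupp.single_apply, hij] using hne⟩

theorem isWeaklyRegular_map_X {l : List σ} (hl : l.Nodup) :
    IsWeaklyRegular (MvPolynomial σ R) (l.map (X : σ → MvPolynomial σ R)) := by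
  induction l using List.reverseRecOn with
  | nil => simp
  | append_singleton l i ih =>
    obtain ⟨hl, hi⟩ := by simpa [List.nodup_append] using hl
    have hspan : Ideal.ofList (l.map (X : σ → MvPolynomial σ R)) = Ideal.span (X '' {j | j ∈ l}) :=
      congrArg Ideal.span (by ext; simp)
    rw [List.map_append, isWeaklyRegular_append_iff]
    refine ⟨ih hl, ?_⟩
    rw [List.map_singleton, isWeaklyRegular_singleton_iff, hspan, smul_eq_mul, Ideal.mul_top]
    exact isSMulRegular_X_quotient_span_X_image fun h ↦ hi i h rfl

theorem idealOfVars_ne_top [Nontrivial R] : idealOfVars σ R ≠ ⊤ := by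
  rw [Ideal.ne_top_iff_one, ← pow_one (idealOfVars σ R), ← C_1, C_mem_pow_idealOfVars_iff]
  simp

theorem hasRegularSequenceIn_idealOfVars [Nontrivial R] [Fintype σ] :
    HasRegularSequenceIn (idealOfVars σ R) (MvPolynomial σ R) (Fintype.card σ) := by
  have hmem : ∀ r ∈ Finset.univ.toList.map (X : σ → MvPolynomial σ R), r ∈ idealOfVars σ R := by
    simp only [List.mem_map]
    rintro _ ⟨i, -, rfl⟩
    exact Ideal.subset_span ⟨i, rfl⟩
  refine ⟨_, by simp, hmem, isWeaklyRegular_map_X (Finset.nodup_toList _), fun h ↦ ?_⟩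
  rw [smul_eq_mul, Ideal.mul_top] at h
  exact idealOfVars_ne_top (top_le_iff.1 (h.le.trans (Ideal.span_le.2 hmem)))

theorem le_idealOfVars_of_homogeneousComponent_zero_mem {k : Type*} [Field k]
    {I : Ideal (MvPolynomial σ k)} (hI : I ≠ ⊤) (h : ∀ p ∈ I, homogeneousComponent 0 p ∈ I) :
    I ≤ idealOfVars σ k := by
  intro p hp
  rw [← pow_one (idealOfVars σ k), mem_pow_idealOfVars_iff']
  intro d hd
  obtain rfl : d = 0 := d.degree_eq_zero_iff.1 (Nat.lt_one_iff.1 hd)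
  by_contra hne
  have hC : C (coeff 0 p) ∈ I := by simpa only [homogeneousComponent_zero] using h p hp
  exact hI (Ideal.eq_top_of_isUnit_mem I hC ((isUnit_iff_ne_zero.2 hne).map C))

end PolynomialRing

/-- A basic double link of an ACM codimension-two homogeneous ideal is again of height 2
with Cohen-Macaulay quotient. -/
theorem basic_double_link_is_CM
    {k : Type*} [Field k] (n : ℕ) (hn : 2 ≤ n)
    (I₁ : Ideal (MvPolynomial (Fin (n + 1)) k))
    (hhom : ∀ p ∈ I₁, ∀ m : ℕ, homogeneousComponent m p ∈ I₁)
    (hht : idealHeight I₁ = 2) (hcm : quotientIsCM k n I₁ 2)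
    (F₁ F₂ : MvPolynomial (Fin (n + 1)) k) (d₁ d₂ : ℕ)
    (h1 : F₁ ∈ I₁) (hd1 : F₁.IsHomogeneous d₁) (hd2 : F₂.IsHomogeneous d₂)
    (hreg : RingTheory.Sequence.IsRegular (MvPolynomial (Fin (n + 1)) k) [F₁, F₂]) :
    idealHeight (Ideal.span {F₂} * I₁ + Ideal.span {F₁}) = 2 ∧
      quotientIsCM k n (Ideal.span {F₂} * I₁ + Ideal.span {F₁}) 2 := by
  have hI₁ : I₁ ≠ ⊤ := ne_top_of_idealHeight_ne_top (by simp [hht])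
  have hdepth : HasRegularSequenceIn (idealOfVars (Fin (n + 1)) k)
      (MvPolynomial (Fin (n + 1)) k) (n + 1 - 2 + 2) := by
    rw [Nat.sub_add_cancel (hn.trans n.le_succ)]
    simpa using hasRegularSequenceIn_idealOfVars (σ := Fin (n + 1)) (R := k)
  exact basic_double_link_is_CM_general idealOfVars_ne_top hdepth
    (le_idealOfVars_of_homogeneousComponent_zero_mem hI₁ fun p hp ↦ hhom p hp 0) hht hcm h1
    hreg.toIsWeaklyRegular
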